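/- Let h : ℝ → ℝ be thrice differentiable with h', h''' ∈ L¹(ℝ), vanishing at infinity, and ĥ' ∈ L¹(ℝ). Then C_h := (1/√(2π)) ∫_ℝ |ĥ'(ω)| dω ≤ (2√2/√π) · √(‖h'‖₁ ‖h'''‖₁). -/

import Mathlib

open MeasureTheory

/-- Fourier transform with the symmetric `1/√(2π)` normalization. -/
noncomputable def FT (g : ℝ → ℝ) (ω : ℝ) : ℂ :=
  (Real.sqrt (2 * Real.pi) : ℂ)⁻¹ * ∫ x : ℝ, (g x : ℂ) * Complex.exp (-(Complex.I * ω * x))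

theorem ft_norm_le (g : ℝ → ℝ) (ω : ℝ) :
    ‖∫ x : ℝ, (g x : ℂ) * Complex.exp (-(Complex.I * ω * x))‖ ≤ ∫ x, |g x| := by
  refine (norm_integral_le_integral_norm _).trans (le_of_eq ?_)
  congr 1
  ext x
  have : -(Complex.I * ω * x) = ((-(ω * x) : ℝ) : ℂ) * Complex.I := by push_cast; ring
  rw [norm_mul, this, Complex.norm_exp_ofReal_mul_I, mul_one, Complex.norm_real, Real.norm_eq_abs]

theorem exp_integrable (g : ℝ → ℝ) (hg : Integrable g) (ω : ℝ) :
    Integrable (fun x : ℝ => (g x : ℂ) * Complex.exp (-(Complex.I * ω * x))) := by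
  refine hg.ofReal.mul_bdd (c := 1) ?_ ?_
  · exact Continuous.aestronglyMeasurable (by fun_prop)
  · refine Filter.Eventually.of_forall fun x => ?_
    have : -(Complex.I * ω * x) = ((-(ω * x) : ℝ) : ℂ) * Complex.I := by push_cast; ring
    rw [this, Complex.norm_exp_ofReal_mul_I]

theorem exp_tendsto (g : ℝ → ℝ) (ω : ℝ) (l : Filter ℝ) (hg : Filter.Tendsto g l (nhds 0)) :
    Filter.Tendsto (fun x : ℝ => (g x : ℂ) * Complex.exp (-(Complex.I * ω * x))) l (nhds 0) := by
  rw [tendsto_zero_iff_norm_tendsto_zero] at hg ⊢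
  refine hg.congr fun x => ?_
  have : -(Complex.I * ω * x) = ((-(ω * x) : ℝ) : ℂ) * Complex.I := by push_cast; ring
  rw [norm_mul, this, Complex.norm_exp_ofReal_mul_I, mul_one, Complex.norm_real]

theorem ft_deriv (h₁ h₂ h₃ : ℝ → ℝ)
    (hd2 : ∀ x, HasDerivAt h₁ (h₂ x) x)
    (hd3 : ∀ x, HasDerivAt h₂ (h₃ x) x)
    (hi1 : Integrable h₁) (hi3 : Integrable h₃)
    (hv1t : Filter.Tendsto h₁ Filter.atTop (nhds 0))
    (hv1b : Filter.Tendsto h₁ Filter.atBot (nhds 0))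
    (hv2t : Filter.Tendsto h₂ Filter.atTop (nhds 0))
    (hv2b : Filter.Tendsto h₂ Filter.atBot (nhds 0)) (ω : ℝ) :
    ∫ x : ℝ, (h₃ x : ℂ) * Complex.exp (-(Complex.I * ω * x)) =
      -((ω : ℂ) ^ 2 * ∫ x : ℝ, (h₁ x : ℂ) * Complex.exp (-(Complex.I * ω * x))) := by
  have e1 := exp_integrable h₁ hi1 ω
  have e3 := exp_integrable h₃ hi3 ω
  have key : ∫ x : ℝ, ((h₃ x : ℂ) * Complex.exp (-(Complex.I * ω * x)) +
      (ω : ℂ) ^ 2 * ((h₁ x : ℂ) * Complex.exp (-(Complex.I * ω * x)))) = 0 - 0 := by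
    refine integral_of_hasDerivAt_of_tendsto
      (f := fun x : ℝ => (h₂ x : ℂ) * Complex.exp (-(Complex.I * ω * x)) +
        Complex.I * ω * ((h₁ x : ℂ) * Complex.exp (-(Complex.I * ω * x)))) ?_
      (e3.add (e1.const_mul _)) ?_ ?_
    · intro x
      have hE : HasDerivAt (fun x : ℝ => Complex.exp (-(Complex.I * ω * x)))
          (Complex.exp (-(Complex.I * ω * x)) * (-(Complex.I * ω * 1))) x :=
        (((hasDerivAt_id x).ofReal_comp.const_mul (Complex.I * (ω : ℂ))).neg).cexp
      have := ((hd3 x).ofReal_comp.mul hE).add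
        (((hd2 x).ofReal_comp.mul hE).const_mul (Complex.I * (ω : ℂ)))
      refine this.congr_deriv ?_
      linear_combination (-(ω : ℂ) ^ 2 * (h₁ x) * Complex.exp (-(Complex.I * ω * x))) * Complex.I_sq
    · simpa using (exp_tendsto h₂ ω _ hv2b).add ((exp_tendsto h₁ ω _ hv1b).const_mul (Complex.I * (ω : ℂ)))
    · simpa using (exp_tendsto h₂ ω _ hv2t).add ((exp_tendsto h₁ ω _ hv1t).const_mul (Complex.I * (ω : ℂ)))
  rw [integral_add e3 (e1.const_mul _), integral_const_mul] at key
  linear_combination key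

/-- The simpler Barron-constant bound `C_h ≤ (2√2/√π)·√(‖h'‖₁‖h'''‖₁)`. -/
theorem barron_constant_simple_bound
    (h h₁ h₂ h₃ : ℝ → ℝ)
    (hd1 : ∀ x, HasDerivAt h (h₁ x) x)
    (hd2 : ∀ x, HasDerivAt h₁ (h₂ x) x)
    (hd3 : ∀ x, HasDerivAt h₂ (h₃ x) x)
    (hi1 : Integrable h₁) (hi3 : Integrable h₃)
    (hv1t : Filter.Tendsto h₁ Filter.atTop (nhds 0))
    (hv1b : Filter.Tendsto h₁ Filter.atBot (nhds 0))
    (hv2t : Filter.Tendsto h₂ Filter.atTop (nhds 0))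
    (hv2b : Filter.Tendsto h₂ Filter.atBot (nhds 0))
    (hFT : Integrable (fun ω => ‖FT h₁ ω‖)) :
    (Real.sqrt (2 * Real.pi))⁻¹ * ∫ ω : ℝ, ‖FT h₁ ω‖ ≤
      (2 * Real.sqrt 2 / Real.sqrt Real.pi) *
        Real.sqrt ((∫ x, |h₁ x|) * (∫ x, |h₃ x|)) := by
  have hA : 0 ≤ ∫ x, |h₁ x| := integral_nonneg fun x => abs_nonneg _
  have hB : 0 ≤ ∫ x, |h₃ x| := integral_nonneg fun x => abs_nonneg _
  have hpi := Real.pi_pos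
  have hc : 0 < (Real.sqrt (2 * Real.pi))⁻¹ := by positivity
  have hN : ∀ ω, ‖FT h₁ ω‖ = (Real.sqrt (2 * Real.pi))⁻¹ *
      ‖∫ x : ℝ, (h₁ x : ℂ) * Complex.exp (-(Complex.I * ω * x))‖ := by
    intro ω
    rw [FT, norm_mul, norm_inv, Complex.norm_real, Real.norm_of_nonneg (Real.sqrt_nonneg _)]
  have b1 : ∀ ω, ‖FT h₁ ω‖ ≤ (Real.sqrt (2 * Real.pi))⁻¹ * ∫ x, |h₁ x| := by
    intro ω
    rw [hN]
    exact mul_le_mul_of_nonneg_left (ft_norm_le h₁ ω) hc.le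
  have b3 : ∀ ω, ω ^ 2 * ‖FT h₁ ω‖ ≤ (Real.sqrt (2 * Real.pi))⁻¹ * ∫ x, |h₃ x| := by
    intro ω
    have := ft_norm_le h₃ ω
    rw [ft_deriv h₁ h₂ h₃ hd2 hd3 hi1 hi3 hv1t hv1b hv2t hv2b, norm_neg, norm_mul, norm_pow,
      Complex.norm_real, Real.norm_eq_abs, sq_abs] at this
    rw [hN, mul_left_comm]
    exact mul_le_mul_of_nonneg_left this hc.le
  have hcc : (Real.sqrt (2 * Real.pi))⁻¹ * (Real.sqrt (2 * Real.pi))⁻¹ = (2 * Real.pi)⁻¹ := by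
    rw [← mul_inv, Real.mul_self_sqrt (by positivity)]
  generalize (Real.sqrt (2 * Real.pi))⁻¹ = c at *
  generalize (∫ x, |h₁ x|) = A at *
  generalize (∫ x, |h₃ x|) = B at *
  have hR : 0 ≤ (2 * Real.sqrt 2 / Real.sqrt Real.pi) * Real.sqrt (A * B) := by positivity
  rcases hA.eq_or_lt with hA0 | hA0
  · have : ∀ ω, ‖FT h₁ ω‖ = 0 := fun ω =>
      le_antisymm (by simpa [← hA0] using b1 ω) (norm_nonneg _)
    simp only [this, integral_zero, mul_zero]
    exact hR
  rcases hB.eq_or_lt with hB0 | hB0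
  · have : (fun ω => ‖FT h₁ ω‖) =ᵐ[volume] fun _ => (0 : ℝ) := by
      filter_upwards [Measure.ae_ne volume (0 : ℝ)] with ω hω
      have h3 := b3 ω
      rw [← hB0, mul_zero] at h3
      have : 0 < ω ^ 2 := by positivity
      exact le_antisymm (by by_contra hh; push Not at hh; nlinarith [mul_pos this hh]) (norm_nonneg _)
    rw [integral_congr_ae this, integral_zero, mul_zero]
    exact hR
  have hAs := Real.sqrt_pos.2 hA0
  have hBs := Real.sqrt_pos.2 hB0
  have sA := Real.sq_sqrt hA
  have sB := Real.sq_sqrt hB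
  rw [Real.sqrt_mul hA]
  generalize Real.sqrt A = a at *
  generalize Real.sqrt B = b at *
  subst sA sB
  have hint : Integrable (fun ω : ℝ => 2 * c * a ^ 2 * (1 + (a / b * ω) ^ 2)⁻¹) :=
    ((integrable_inv_one_add_sq).comp_mul_left' (by positivity : a / b ≠ 0)).const_mul _
  have hle : ∫ ω, ‖FT h₁ ω‖ ≤ ∫ ω : ℝ, 2 * c * a ^ 2 * (1 + (a / b * ω) ^ 2)⁻¹ := by
    refine integral_mono hFT hint fun ω => ?_
    have h1 := b1 ω
    have h3 := b3 ω
    simp only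
    rw [← div_eq_mul_inv, le_div_iff₀ (by positivity)]
    have : ‖FT h₁ ω‖ * (1 + (a / b * ω) ^ 2) =
      ‖FT h₁ ω‖ + a ^ 2 / b ^ 2 * (ω ^ 2 * ‖FT h₁ ω‖) := by ring
    rw [this]
    have h4 : a ^ 2 / b ^ 2 * (ω ^ 2 * ‖FT h₁ ω‖) ≤ a ^ 2 / b ^ 2 * (c * b ^ 2) :=
      mul_le_mul_of_nonneg_left h3 (by positivity)
    have h5 : a ^ 2 / b ^ 2 * (c * b ^ 2) = c * a ^ 2 := by field_simp
    linarith
  have hval : ∫ ω : ℝ, 2 * c * a ^ 2 * (1 + (a / b * ω) ^ 2)⁻¹ = 2 * c * a * b * Real.pi := by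
    rw [integral_const_mul, Measure.integral_comp_mul_left (fun y : ℝ => (1 + y ^ 2)⁻¹) (a / b),
      integral_univ_inv_one_add_sq, abs_of_pos (by positivity), smul_eq_mul]
    field_simp
  rw [hval] at hle
  have h1 : 1 ≤ 2 * Real.sqrt 2 / Real.sqrt Real.pi := by
    rw [le_div_iff₀ (by positivity), one_mul]
    apply Real.sqrt_le_iff.2
    refine ⟨by positivity, ?_⟩
    rw [mul_pow, Real.sq_sqrt (by norm_num)]
    linarith [Real.pi_le_four]
  calc c * ∫ ω, ‖FT h₁ ω‖ ≤ c * (2 * c * a * b * Real.pi) := mul_le_mul_of_nonneg_left hle hc.le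
    _ = c * c * (2 * Real.pi) * (a * b) := by ring
    _ = 1 * (a * b) := by rw [hcc, inv_mul_cancel₀ (by positivity)]
    _ ≤ _ := mul_le_mul_of_nonneg_right h1 (by positivity)
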